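/- (Theorem 4, (1) ⇒ (3), and Corollary 1.) Suppose J(0, u) ≥ 0 for every control u and there exists an open-loop optimal control for Problem (LQ) with initial value x₀. Then there exists an open-loop optimal control u* for x₀ such that lim_{ε→0⁺} Σ_{t=0}^{N−1}|u^ε_t − u*_t|² = 0, where u^ε is the open-loop optimal control of the perturbed Problem (LQ)_ε for initial value x₀; i.e., the family {u^ε} converges strongly, as ε → 0⁺, to an open-loop optimal control of Problem (LQ) for x₀. -/

import Mathlib

open Matrix Finset

noncomputable section

/-- State trajectory of the discrete-time linear system `x_{t+1} = A_t x_t + B_t u_t`. -/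
def lqState {n m : ℕ} (A : ℕ → Matrix (Fin n) (Fin n) ℝ) (B : ℕ → Matrix (Fin n) (Fin m) ℝ)
    (x₀ : Fin n → ℝ) (u : ℕ → Fin m → ℝ) : ℕ → Fin n → ℝ
  | 0 => x₀
  | t + 1 => A t *ᵥ lqState A B x₀ u t + B t *ᵥ u t

/-- Quadratic cost `J(x₀, u)`. -/
def lqCost {n m : ℕ} (N : ℕ) (A : ℕ → Matrix (Fin n) (Fin n) ℝ)
    (B : ℕ → Matrix (Fin n) (Fin m) ℝ) (Q : ℕ → Matrix (Fin n) (Fin n) ℝ)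
    (R : ℕ → Matrix (Fin m) (Fin m) ℝ) (S : ℕ → Matrix (Fin m) (Fin n) ℝ)
    (H : Matrix (Fin n) (Fin n) ℝ) (x₀ : Fin n → ℝ) (u : ℕ → Fin m → ℝ) : ℝ :=
  (∑ t ∈ range N,
      (lqState A B x₀ u t ⬝ᵥ Q t *ᵥ lqState A B x₀ u t
        + 2 * (u t ⬝ᵥ S t *ᵥ lqState A B x₀ u t)
        + u t ⬝ᵥ R t *ᵥ u t))
    + lqState A B x₀ u N ⬝ᵥ H *ᵥ lqState A B x₀ u N

/-- Closed-loop state `x_{t+1} = (A_t + B_t K_t) x_t + B_t v_t`. -/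
def clState {n m : ℕ} (A : ℕ → Matrix (Fin n) (Fin n) ℝ) (B : ℕ → Matrix (Fin n) (Fin m) ℝ)
    (K : ℕ → Matrix (Fin m) (Fin n) ℝ) (v : ℕ → Fin m → ℝ) (x₀ : Fin n → ℝ) :
    ℕ → Fin n → ℝ
  | 0 => x₀
  | t + 1 => (A t + B t * K t) *ᵥ clState A B K v x₀ t + B t *ᵥ v t

/-- Outcome control `u_t = K_t x_t + v_t` of a closed-loop pair. -/
def clControl {n m : ℕ} (A : ℕ → Matrix (Fin n) (Fin n) ℝ) (B : ℕ → Matrix (Fin n) (Fin m) ℝ)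
    (K : ℕ → Matrix (Fin m) (Fin n) ℝ) (v : ℕ → Fin m → ℝ) (x₀ : Fin n → ℝ) (t : ℕ) :
    Fin m → ℝ :=
  K t *ᵥ clState A B K v x₀ t + v t


/-- Perturbed cost `J_ε(x₀,u) = J(x₀,u) + ε Σ|u_t|²`. -/
def lqCostPert {n m : ℕ} (N : ℕ) (A : ℕ → Matrix (Fin n) (Fin n) ℝ)
    (B : ℕ → Matrix (Fin n) (Fin m) ℝ) (Q : ℕ → Matrix (Fin n) (Fin n) ℝ)
    (R : ℕ → Matrix (Fin m) (Fin m) ℝ) (S : ℕ → Matrix (Fin m) (Fin n) ℝ)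
    (H : Matrix (Fin n) (Fin n) ℝ) (ε : ℝ) (x₀ : Fin n → ℝ) (u : ℕ → Fin m → ℝ) : ℝ :=
  lqCost N A B Q R S H x₀ u + ε * ∑ t ∈ range N, u t ⬝ᵥ u t

/-- Auxiliary backward recursion for the perturbed Riccati equation:
`lqPAux ... k` is the Riccati solution at time `N - k`. -/
def lqPAux {n m : ℕ} (N : ℕ) (A : ℕ → Matrix (Fin n) (Fin n) ℝ)
    (B : ℕ → Matrix (Fin n) (Fin m) ℝ) (Q : ℕ → Matrix (Fin n) (Fin n) ℝ)
    (R : ℕ → Matrix (Fin m) (Fin m) ℝ) (S : ℕ → Matrix (Fin m) (Fin n) ℝ)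
    (H : Matrix (Fin n) (Fin n) ℝ) (ε : ℝ) : ℕ → Matrix (Fin n) (Fin n) ℝ
  | 0 => H
  | k + 1 =>
    Q (N - (k + 1)) + (A (N - (k + 1)))ᵀ * lqPAux N A B Q R S H ε k * A (N - (k + 1))
      - ((A (N - (k + 1)))ᵀ * lqPAux N A B Q R S H ε k * B (N - (k + 1)) + (S (N - (k + 1)))ᵀ)
        * (R (N - (k + 1)) + (B (N - (k + 1)))ᵀ * lqPAux N A B Q R S H ε k * B (N - (k + 1))
            + ε • (1 : Matrix (Fin m) (Fin m) ℝ))⁻¹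
        * ((B (N - (k + 1)))ᵀ * lqPAux N A B Q R S H ε k * A (N - (k + 1)) + S (N - (k + 1)))

/-- Solution `P^ε_t` of the perturbed Riccati recursion
`P^ε_N = H`, `P^ε_t = Q_t + A_t′P^ε_{t+1}A_t − (A_t′P^ε_{t+1}B_t + S_t′)(R_t +
B_t′P^ε_{t+1}B_t + εI)⁻¹(B_t′P^ε_{t+1}A_t + S_t)`. -/
def lqPe {n m : ℕ} (N : ℕ) (A : ℕ → Matrix (Fin n) (Fin n) ℝ)
    (B : ℕ → Matrix (Fin n) (Fin m) ℝ) (Q : ℕ → Matrix (Fin n) (Fin n) ℝ)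
    (R : ℕ → Matrix (Fin m) (Fin m) ℝ) (S : ℕ → Matrix (Fin m) (Fin n) ℝ)
    (H : Matrix (Fin n) (Fin n) ℝ) (ε : ℝ) (t : ℕ) : Matrix (Fin n) (Fin n) ℝ :=
  lqPAux N A B Q R S H ε (N - t)

/-- Perturbed feedback gain `K^ε_t = −(R_t + B_t′P^ε_{t+1}B_t + εI)⁻¹(B_t′P^ε_{t+1}A_t + S_t)`. -/
def lqKe {n m : ℕ} (N : ℕ) (A : ℕ → Matrix (Fin n) (Fin n) ℝ)
    (B : ℕ → Matrix (Fin n) (Fin m) ℝ) (Q : ℕ → Matrix (Fin n) (Fin n) ℝ)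
    (R : ℕ → Matrix (Fin m) (Fin m) ℝ) (S : ℕ → Matrix (Fin m) (Fin n) ℝ)
    (H : Matrix (Fin n) (Fin n) ℝ) (ε : ℝ) (t : ℕ) : Matrix (Fin m) (Fin n) ℝ :=
  -((R t + (B t)ᵀ * lqPe N A B Q R S H ε (t + 1) * B t
      + ε • (1 : Matrix (Fin m) (Fin m) ℝ))⁻¹
    * ((B t)ᵀ * lqPe N A B Q R S H ε (t + 1) * A t + S t))

/-- Perturbed optimal control `u^ε_t = K^ε_t x^ε_t`, where `x^ε` is the closed-loop state
`x^ε_{t+1} = (A_t + B_t K^ε_t) x^ε_t`, `x^ε_0 = x₀`. -/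
def lqUe {n m : ℕ} (N : ℕ) (A : ℕ → Matrix (Fin n) (Fin n) ℝ)
    (B : ℕ → Matrix (Fin n) (Fin m) ℝ) (Q : ℕ → Matrix (Fin n) (Fin n) ℝ)
    (R : ℕ → Matrix (Fin m) (Fin m) ℝ) (S : ℕ → Matrix (Fin m) (Fin n) ℝ)
    (H : Matrix (Fin n) (Fin n) ℝ) (ε : ℝ) (x₀ : Fin n → ℝ) (t : ℕ) : Fin m → ℝ :=
  lqKe N A B Q R S H ε t *ᵥ
    clState A B (lqKe N A B Q R S H ε) (fun _ => 0) x₀ t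

/-!
The perturbed problem is the problem with `R_t + ε I` in place of `R_t`, and its cost from rest is
positive definite in the control. The value of this cost at a closed-loop control driven by an
impulse at time `t` is the quadratic form of `R_t + B_t′P^ε_{t+1}B_t + ε I`, so these weights are
positive definite and completing the square shows that `u^ε` minimizes `J(x₀, ·) + ε ‖·‖²`.

Nonnegativity of `J(0, ·)` makes `J(x₀, ·)` convex. Strong convexity of `J(x₀, ·) + ε ‖·‖²`,
compared with minimality of `u^δ`, then gives `‖u^ε - u^δ‖² ≤ ‖u^δ‖² - ‖u^ε‖²` for `0 < δ ≤ ε`.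
Hence `‖u^ε‖²` increases as `ε` decreases; it is bounded by the squared norm of any minimizer of
`J(x₀, ·)`, so it converges and `u^ε` is Cauchy.
-/

section Tikhonov

open Filter Topology

theorem exists_tendsto_of_norm_sub_sq_le {ι E : Type*} [SeminormedAddCommGroup E]
    [CompleteSpace E] {l : Filter ι} [l.NeBot] {u : ι → E} {g : ι → ℝ} {L : ℝ}
    (hg : Tendsto g l (𝓝 L))
    (hug : ∀ᶠ p in l ×ˢ l, ‖u p.1 - u p.2‖ ^ 2 ≤ dist (g p.1) (g p.2)) :
    ∃ a, Tendsto u l (𝓝 a) := by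
  rw [← cauchy_map_iff_exists_tendsto, cauchy_map_iff, Metric.uniformity_eq_comap_nhds_zero,
    tendsto_comap_iff]
  have hdist : Tendsto (fun p : ι × ι ↦ dist (g p.1) (g p.2)) (l ×ˢ l) (𝓝 0) := by
    simpa only [dist_self, Function.comp_apply] using
      (hg.comp tendsto_fst).dist (hg.comp tendsto_snd)
  have hsqrt := hdist.sqrt
  rw [Real.sqrt_zero] at hsqrt
  refine ⟨inferInstance, squeeze_zero' (.of_forall fun p ↦ dist_nonneg) ?_ hsqrt⟩
  filter_upwards [hug] with p hp
  rw [Function.comp_apply, dist_eq_norm]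
  exact Real.le_sqrt_of_sq_le hp

theorem add_modulus_norm_sub_le_of_isMinOn {E : Type*} [NormedAddCommGroup E] [NormedSpace ℝ E]
    {s : Set E} {φ : ℝ → ℝ} {f : E → ℝ} {x y : E} (hf : UniformConvexOn s φ f)
    (hmin : IsMinOn f s x) (hx : x ∈ s) (hy : y ∈ s) : f x + φ ‖x - y‖ ≤ f y := by
  have hsegment : ∀ t ∈ Set.Ioo (0 : ℝ) 1, f x + (1 - t) * φ ‖x - y‖ ≤ f y := by
    rintro t ⟨ht₀, ht₁⟩
    have hmem := hf.1 hx hy (sub_nonneg.2 ht₁.le) ht₀.le (sub_add_cancel 1 t)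
    have hle := (hmin hmem).trans
      (hf.2 hx hy (sub_nonneg.2 ht₁.le) ht₀.le (sub_add_cancel 1 t))
    simp only [smul_eq_mul] at hle
    exact le_of_mul_le_mul_left (by linarith) ht₀
  have hlim : Tendsto (fun t : ℝ ↦ f x + (1 - t) * φ ‖x - y‖) (𝓝[>] 0)
      (𝓝 (f x + (1 - 0) * φ ‖x - y‖)) :=
    (Continuous.tendsto (by fun_prop) 0).mono_left nhdsWithin_le_nhds
  rw [sub_zero, one_mul] at hlim
  exact le_of_tendsto hlim (mem_of_superset (Ioo_mem_nhdsGT one_pos) hsegment)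

/-- `u ε` minimizes the Tikhonov regularization `J + ε ‖·‖²` for every `ε > 0`. -/
def IsTikhonovFamily {E : Type*} [Norm E] (J : E → ℝ) (u : ℝ → E) : Prop :=
  ∀ ε, 0 < ε → IsMinOn (fun v ↦ J v + ε * ‖v‖ ^ 2) Set.univ (u ε)

namespace IsTikhonovFamily

section Seminormed

variable {E : Type*} [SeminormedAddCommGroup E] {J : E → ℝ} {u : ℝ → E}

theorem norm_le {b : E} {ε : ℝ} (hu : IsTikhonovFamily J u) (hb : IsMinOn J Set.univ b)
    (hε : 0 < ε) : ‖u ε‖ ≤ ‖b‖ := by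
  have hle : ε * ‖u ε‖ ^ 2 ≤ ε * ‖b‖ ^ 2 := by
    linarith [isMinOn_univ_iff.1 (hu ε hε) b, isMinOn_univ_iff.1 hb (u ε)]
  exact le_of_sq_le_sq (le_of_mul_le_mul_left hle hε) (norm_nonneg b)

theorem isMinOn_of_tendsto {a : E} (hu : IsTikhonovFamily J u) (hJ : LowerSemicontinuous J)
    (ha : Tendsto u (𝓝[>] 0) (𝓝 a)) : IsMinOn J Set.univ a := by
  refine isMinOn_univ_iff.2 fun v ↦ le_of_forall_lt_imp_le_of_dense fun y hy ↦ ?_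
  have hlim : Tendsto (fun ε : ℝ ↦ J v + ε * ‖v‖ ^ 2) (𝓝[>] 0) (𝓝 (J v + 0 * ‖v‖ ^ 2)) :=
    (Continuous.tendsto (by fun_prop) 0).mono_left nhdsWithin_le_nhds
  rw [zero_mul, add_zero] at hlim
  refine ge_of_tendsto hlim ?_
  filter_upwards [ha.eventually (hJ a y hy), self_mem_nhdsWithin] with ε hyε hε
  have hpen : 0 ≤ ε * ‖u ε‖ ^ 2 := mul_nonneg (le_of_lt hε) (sq_nonneg _)
  linarith [isMinOn_univ_iff.1 (hu ε hε) v]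

end Seminormed

variable {E : Type*} [NormedAddCommGroup E] [InnerProductSpace ℝ E] {J : E → ℝ} {u : ℝ → E}

theorem norm_sub_sq_le {δ ε : ℝ} (hu : IsTikhonovFamily J u) (hJ : ConvexOn ℝ Set.univ J)
    (hδ : 0 < δ) (hδε : δ ≤ ε) : ‖u ε - u δ‖ ^ 2 ≤ ‖u δ‖ ^ 2 - ‖u ε‖ ^ 2 := by
  obtain rfl | hδε := hδε.eq_or_lt
  · simp
  have hε : 0 < ε := hδ.trans hδε
  have hstrong : StrongConvexOn Set.univ (2 * ε) fun v ↦ J v + ε * ‖v‖ ^ 2 :=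
    strongConvexOn_iff_convex.2 (by simpa using hJ)
  have hgrowth := add_modulus_norm_sub_le_of_isMinOn hstrong (hu ε hε)
    (Set.mem_univ _) (Set.mem_univ (u δ))
  have hmin := isMinOn_univ_iff.1 (hu δ hδ) (u ε)
  refine le_of_mul_le_mul_left ?_ (sub_pos.2 hδε)
  linarith [mul_nonneg hδ.le (sq_nonneg ‖u ε - u δ‖)]

theorem exists_tendsto_isMinOn [CompleteSpace E] (hu : IsTikhonovFamily J u)
    (hconv : ConvexOn ℝ Set.univ J) (hlsc : LowerSemicontinuous J)
    (hmin : ∃ b, IsMinOn J Set.univ b) :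
    ∃ a, IsMinOn J Set.univ a ∧ Tendsto u (𝓝[>] 0) (𝓝 a) := by
  obtain ⟨b, hb⟩ := hmin
  have hanti : AntitoneOn (fun ε ↦ ‖u ε‖ ^ 2) (Set.Ioi 0) := fun δ hδ ε _ hδε ↦
    sub_nonneg.1 ((sq_nonneg _).trans (hu.norm_sub_sq_le hconv hδ hδε))
  have hbdd : BddAbove ((fun ε ↦ ‖u ε‖ ^ 2) '' Set.Ioi 0) :=
    ⟨‖b‖ ^ 2, Set.forall_mem_image.2 fun ε hε ↦
      pow_le_pow_left₀ (norm_nonneg _) (hu.norm_le hb hε) 2⟩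
  have hpos : ∀ᶠ ε : ℝ in 𝓝[>] 0, 0 < ε := self_mem_nhdsWithin
  obtain ⟨a, ha⟩ := exists_tendsto_of_norm_sub_sq_le (u := u) (hanti.tendsto_nhdsGT hbdd) <| by
    filter_upwards [hpos.prod_mk hpos] with p ⟨hp₁, hp₂⟩
    rcases le_total p.1 p.2 with h | h
    · rw [norm_sub_rev]
      exact (hu.norm_sub_sq_le hconv hp₁ h).trans (le_abs_self _)
    · rw [dist_comm]
      exact (hu.norm_sub_sq_le hconv hp₂ h).trans (le_abs_self _)
  exact ⟨a, hu.isMinOn_of_tendsto hlsc ha, ha⟩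

end IsTikhonovFamily

end Tikhonov

section CompletionOfSquares

variable {α ι κ : Type*} [CommRing α] [Fintype ι]

theorem dotProduct_mulVec_comm_of_isSymm {M : Matrix ι ι α} (hM : M.IsSymm) (x y : ι → α) :
    x ⬝ᵥ M *ᵥ y = y ⬝ᵥ M *ᵥ x := by
  rw [← dotProduct_transpose_mulVec, hM.eq]

/-- The control weight `R + B′PB` of a single time step whose terminal cost is `P`. -/
def riccatiWeight (B : Matrix ι κ α) (R : Matrix κ κ α) (P : Matrix ι ι α) : Matrix κ κ α :=
  R + Bᵀ * P * B

theorem isSymm_riccatiWeight {R : Matrix κ κ α} {P : Matrix ι ι α} (hR : R.IsSymm) (hP : P.IsSymm)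
    (B : Matrix ι κ α) : (riccatiWeight B R P).IsSymm := by
  simp only [IsSymm, riccatiWeight, transpose_add, transpose_mul, transpose_transpose, hP.eq, hR.eq,
    Matrix.mul_assoc]

variable [Fintype κ]

theorem dotProduct_transpose_mul_mul_mulVec {μ ν : Type*} [Fintype μ] [Fintype ν]
    (C : Matrix ι μ α) (P : Matrix ι κ α) (D : Matrix κ ν α) (x : μ → α) (y : ν → α) :
    x ⬝ᵥ (Cᵀ * P * D) *ᵥ y = (C *ᵥ x) ⬝ᵥ P *ᵥ (D *ᵥ y) := by
  rw [Matrix.mul_assoc, ← mulVec_mulVec, dotProduct_transpose_mulVec, ← mulVec_mulVec,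
    dotProduct_comm]

/-- The running cost `x′Qx + 2u′Sx + u′Ru` of one time step. -/
def lqStageCost (Q : Matrix ι ι α) (R : Matrix κ κ α) (S : Matrix κ ι α)
    (x : ι → α) (u : κ → α) : α :=
  x ⬝ᵥ Q *ᵥ x + 2 * (u ⬝ᵥ S *ᵥ x) + u ⬝ᵥ R *ᵥ u

theorem lqStageCost_smul_add_smul {a b : α} (hab : a + b = 1) (Q : Matrix ι ι α)
    (R : Matrix κ κ α) (S : Matrix κ ι α) (x y : ι → α) (u v : κ → α) :
    lqStageCost Q R S (a • x + b • y) (a • u + b • v)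
      = a * lqStageCost Q R S x u + b * lqStageCost Q R S y v
        - a * b * lqStageCost Q R S (x - y) (u - v) := by
  obtain rfl := eq_sub_of_add_eq' hab
  simp only [lqStageCost, mulVec_add, mulVec_sub, mulVec_smul, dotProduct_add, add_dotProduct,
    dotProduct_sub, sub_dotProduct, dotProduct_smul, smul_dotProduct, smul_eq_mul]
  ring

theorem lqStageCost_add_dotProduct_mulVec {P : Matrix ι ι α} (hP : P.IsSymm) (A : Matrix ι ι α)
    (B : Matrix ι κ α) (Q : Matrix ι ι α) (R : Matrix κ κ α) (S : Matrix κ ι α)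
    (x : ι → α) (u : κ → α) :
    lqStageCost Q R S x u + (A *ᵥ x + B *ᵥ u) ⬝ᵥ P *ᵥ (A *ᵥ x + B *ᵥ u)
      = lqStageCost (Q + Aᵀ * P * A) (riccatiWeight B R P) (Bᵀ * P * A + S) x u := by
  simp only [lqStageCost, riccatiWeight, add_mulVec, mulVec_add, dotProduct_add, add_dotProduct,
    dotProduct_transpose_mul_mul_mulVec]
  rw [dotProduct_mulVec_comm_of_isSymm hP (A *ᵥ x) (B *ᵥ u)]
  ring

variable [DecidableEq κ]

theorem lqStageCost_eq_schurComplement_add {M : Matrix κ κ α} (hM : M.IsSymm) (hMu : IsUnit M)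
    (Q : Matrix ι ι α) (G : Matrix κ ι α) (x : ι → α) (u : κ → α) :
    lqStageCost Q M G x u = x ⬝ᵥ (Q - Gᵀ * M⁻¹ * G) *ᵥ x
        + (u + (M⁻¹ * G) *ᵥ x) ⬝ᵥ M *ᵥ (u + (M⁻¹ * G) *ᵥ x) := by
  have hMG : M *ᵥ (M⁻¹ * G) *ᵥ x = G *ᵥ x := by
    rw [mulVec_mulVec, mul_nonsing_inv_cancel_left _ _ ((isUnit_iff_isUnit_det M).1 hMu)]
  simp only [lqStageCost, sub_mulVec, mulVec_add, dotProduct_sub, dotProduct_add, add_dotProduct,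
    dotProduct_transpose_mul_mul_mulVec, hMG]
  rw [dotProduct_mulVec_comm_of_isSymm hM ((M⁻¹ * G) *ᵥ x) u, hMG, ← mulVec_mulVec,
    dotProduct_comm (M⁻¹ *ᵥ G *ᵥ x)]
  ring

/-- The feedback gain `−(R + B′PB)⁻¹(B′PA + S)` of a single time step whose terminal cost is `P`;
it is meaningful only if the weight is invertible. -/
def riccatiGain (A : Matrix ι ι α) (B : Matrix ι κ α) (R : Matrix κ κ α) (S : Matrix κ ι α)
    (P : Matrix ι ι α) : Matrix κ ι α :=
  -((riccatiWeight B R P)⁻¹ * (Bᵀ * P * A + S))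

/-- The Riccati map, sending the value matrix at time `t + 1` to the one at time `t`. -/
def riccatiStep (A : Matrix ι ι α) (B : Matrix ι κ α) (Q : Matrix ι ι α) (R : Matrix κ κ α)
    (S : Matrix κ ι α) (P : Matrix ι ι α) : Matrix ι ι α :=
  Q + Aᵀ * P * A - (Aᵀ * P * B + Sᵀ) * (riccatiWeight B R P)⁻¹ * (Bᵀ * P * A + S)

theorem isSymm_riccatiStep {Q : Matrix ι ι α} {R : Matrix κ κ α} {P : Matrix ι ι α} (hQ : Q.IsSymm)
    (hR : R.IsSymm) (hP : P.IsSymm) (A : Matrix ι ι α) (B : Matrix ι κ α) (S : Matrix κ ι α) :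
    (riccatiStep A B Q R S P).IsSymm := by
  simp only [IsSymm, riccatiStep, transpose_add, transpose_sub, transpose_mul, transpose_transpose,
    transpose_nonsing_inv, (isSymm_riccatiWeight hR hP B).eq, hP.eq, hQ.eq, Matrix.mul_assoc]

theorem lqStageCost_add_dotProduct_mulVec_eq_riccatiStep {R : Matrix κ κ α} {P : Matrix ι ι α}
    (hR : R.IsSymm) (hP : P.IsSymm) {B : Matrix ι κ α} (hM : IsUnit (riccatiWeight B R P))
    (A Q : Matrix ι ι α) (S : Matrix κ ι α) (x : ι → α) (u : κ → α) :
    lqStageCost Q R S x u + (A *ᵥ x + B *ᵥ u) ⬝ᵥ P *ᵥ (A *ᵥ x + B *ᵥ u)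
      = x ⬝ᵥ riccatiStep A B Q R S P *ᵥ x
        + (u - riccatiGain A B R S P *ᵥ x)
          ⬝ᵥ riccatiWeight B R P *ᵥ (u - riccatiGain A B R S P *ᵥ x) := by
  have hG : (Bᵀ * P * A + S)ᵀ = Aᵀ * P * B + Sᵀ := by
    rw [transpose_add, transpose_mul, transpose_mul, transpose_transpose, hP.eq, Matrix.mul_assoc]
  rw [lqStageCost_add_dotProduct_mulVec hP,
    lqStageCost_eq_schurComplement_add (isSymm_riccatiWeight hR hP B) hM, hG, riccatiStep,
    riccatiGain, neg_mulVec, sub_neg_eq_add]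

end CompletionOfSquares

section Riccati

variable {n m N : ℕ} {A : ℕ → Matrix (Fin n) (Fin n) ℝ} {B : ℕ → Matrix (Fin n) (Fin m) ℝ}
  {Q : ℕ → Matrix (Fin n) (Fin n) ℝ} {R : ℕ → Matrix (Fin m) (Fin m) ℝ}
  {S : ℕ → Matrix (Fin m) (Fin n) ℝ} {H : Matrix (Fin n) (Fin n) ℝ}

section ClosedLoop

variable (K : ℕ → Matrix (Fin m) (Fin n) ℝ) (v : ℕ → Fin m → ℝ)

theorem lqState_clControl (x₀ : Fin n → ℝ) (t : ℕ) :
    lqState A B x₀ (clControl A B K v x₀) t = clState A B K v x₀ t := by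
  induction t with
  | zero => rfl
  | succ t ih =>
    rw [lqState, clState, ih, clControl, mulVec_add, add_mulVec, mulVec_mulVec, add_assoc]

theorem clControl_sub_mulVec_lqState (x₀ : Fin n → ℝ) (t : ℕ) :
    clControl A B K v x₀ t - K t *ᵥ lqState A B x₀ (clControl A B K v x₀) t = v t := by
  rw [lqState_clControl, clControl, add_sub_cancel_left]

variable {v} in
theorem clState_zero_eq_zero {t : ℕ} (hv : ∀ s < t, v s = 0) : clState A B K v 0 t = 0 := by
  induction t with
  | zero => rfl
  | succ t ih =>
    rw [clState, ih fun s hs ↦ hv s (hs.trans t.lt_succ_self), hv t t.lt_succ_self, mulVec_zero,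
      mulVec_zero, add_zero]

end ClosedLoop

/-- `P` solves the Riccati equation of the problem with data `A`, `B`, `Q`, `R`, `S`, `H` on the
times `0, …, N`. Invertibility of the weights `R_t + B_t′P_{t+1}B_t` is not part of the notion. -/
structure IsRiccatiSolution (N : ℕ) (A : ℕ → Matrix (Fin n) (Fin n) ℝ)
    (B : ℕ → Matrix (Fin n) (Fin m) ℝ) (Q : ℕ → Matrix (Fin n) (Fin n) ℝ)
    (R : ℕ → Matrix (Fin m) (Fin m) ℝ) (S : ℕ → Matrix (Fin m) (Fin n) ℝ)
    (H : Matrix (Fin n) (Fin n) ℝ) (P : ℕ → Matrix (Fin n) (Fin n) ℝ) : Prop where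
  terminal : P N = H
  step : ∀ t < N, P t = riccatiStep (A t) (B t) (Q t) (R t) (S t) (P (t + 1))

/-- The feedback law induced by a sequence `P` of value matrices. -/
def riccatiFeedback (A : ℕ → Matrix (Fin n) (Fin n) ℝ) (B : ℕ → Matrix (Fin n) (Fin m) ℝ)
    (R : ℕ → Matrix (Fin m) (Fin m) ℝ) (S : ℕ → Matrix (Fin m) (Fin n) ℝ)
    (P : ℕ → Matrix (Fin n) (Fin n) ℝ) (t : ℕ) : Matrix (Fin m) (Fin n) ℝ :=
  riccatiGain (A t) (B t) (R t) (S t) (P (t + 1))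

theorem lqCost_eq_sum_lqStageCost (x₀ : Fin n → ℝ) (u : ℕ → Fin m → ℝ) :
    lqCost N A B Q R S H x₀ u
      = ∑ t ∈ range N, lqStageCost (Q t) (R t) (S t) (lqState A B x₀ u t) (u t)
        + lqState A B x₀ u N ⬝ᵥ H *ᵥ lqState A B x₀ u N :=
  rfl

namespace IsRiccatiSolution

variable {P : ℕ → Matrix (Fin n) (Fin n) ℝ}

theorem isSymm (hP : IsRiccatiSolution N A B Q R S H P) (hQ : ∀ t, (Q t).IsSymm)
    (hR : ∀ t, (R t).IsSymm) (hH : H.IsSymm) {t : ℕ} (ht : t ≤ N) : (P t).IsSymm := by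
  induction ht using Nat.decreasingInduction with
  | self => rwa [hP.terminal]
  | of_succ t ht ih =>
    rw [hP.step t ht]
    exact isSymm_riccatiStep (hQ t) (hR t) ih _ _ _

theorem lqCost_eq (hP : IsRiccatiSolution N A B Q R S H P) (hQ : ∀ t, (Q t).IsSymm)
    (hR : ∀ t, (R t).IsSymm) (hH : H.IsSymm) {s : ℕ} (hs : s ≤ N)
    (hunit : ∀ t, s ≤ t → t < N → IsUnit (riccatiWeight (B t) (R t) (P (t + 1))))
    (x₀ : Fin n → ℝ) (u : ℕ → Fin m → ℝ) :
    lqCost N A B Q R S H x₀ u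
      = ∑ t ∈ range s, lqStageCost (Q t) (R t) (S t) (lqState A B x₀ u t) (u t)
        + lqState A B x₀ u s ⬝ᵥ P s *ᵥ lqState A B x₀ u s
        + ∑ t ∈ Ico s N,
          (u t - riccatiFeedback A B R S P t *ᵥ lqState A B x₀ u t)
            ⬝ᵥ riccatiWeight (B t) (R t) (P (t + 1))
              *ᵥ (u t - riccatiFeedback A B R S P t *ᵥ lqState A B x₀ u t) := by
  induction hs using Nat.decreasingInduction with
  | self => rw [Ico_self, sum_empty, add_zero, hP.terminal, lqCost_eq_sum_lqStageCost]
  | of_succ s hs ih =>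
    rw [ih fun t hst ↦ hunit t (Nat.le_of_succ_le hst), sum_range_succ, lqState,
      sum_eq_sum_Ico_succ_bot hs, hP.step s hs, add_assoc (∑ _ ∈ _, _),
      lqStageCost_add_dotProduct_mulVec_eq_riccatiStep (hR s) (hP.isSymm hQ hR hH hs)
        (hunit s le_rfl hs)]
    simp only [riccatiFeedback, add_assoc]

theorem lqCost_clControl_of_impulse (hP : IsRiccatiSolution N A B Q R S H P)
    (hQ : ∀ t, (Q t).IsSymm) (hR : ∀ t, (R t).IsSymm) (hH : H.IsSymm) {t : ℕ} (ht : t < N)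
    (hunit : ∀ s, t < s → s < N → IsUnit (riccatiWeight (B s) (R s) (P (s + 1))))
    {v : ℕ → Fin m → ℝ} (hv : ∀ s, s ≠ t → v s = 0) :
    lqCost N A B Q R S H 0 (clControl A B (riccatiFeedback A B R S P) v 0)
      = v t ⬝ᵥ riccatiWeight (B t) (R t) (P (t + 1)) *ᵥ v t := by
  set K := riccatiFeedback A B R S P
  have hstate : ∀ s ≤ t, lqState A B 0 (clControl A B K v 0) s = 0 := fun s hs ↦ by
    rw [lqState_clControl, clState_zero_eq_zero K fun r hr ↦ hv r (hr.trans_le hs).ne]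
  have hcontrol : ∀ s ≤ t, clControl A B K v 0 s = v s := fun s hs ↦ by
    rw [clControl, ← lqState_clControl, hstate s hs, mulVec_zero, zero_add]
  have hpast : ∀ s ∈ range t, lqStageCost (Q s) (R s) (S s)
      (lqState A B 0 (clControl A B K v 0) s) (clControl A B K v 0 s) = 0 := fun s hs ↦ by
    have hst := mem_range.1 hs
    rw [hstate s hst.le, hcontrol s hst.le, hv s hst.ne]
    simp [lqStageCost]
  have hfuture : ∀ s ∈ Ico (t + 1) N, v s ⬝ᵥ riccatiWeight (B s) (R s) (P (s + 1)) *ᵥ v s = 0 :=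
    fun s hs ↦ by rw [hv s (Nat.lt_of_succ_le (mem_Ico.1 hs).1).ne', zero_dotProduct]
  rw [hP.lqCost_eq hQ hR hH ht hunit, sum_range_succ, sum_eq_zero hpast, zero_add, lqState,
    lqStageCost_add_dotProduct_mulVec (hP.isSymm hQ hR hH ht), hstate t le_rfl, hcontrol t le_rfl]
  simp only [K, clControl_sub_mulVec_lqState, sum_eq_zero hfuture]
  simp [lqStageCost]

theorem posDef_riccatiWeight (hP : IsRiccatiSolution N A B Q R S H P) (hQ : ∀ t, (Q t).IsSymm)
    (hR : ∀ t, (R t).IsSymm) (hH : H.IsSymm)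
    (hpos : ∀ u : ℕ → Fin m → ℝ, (∃ t < N, u t ≠ 0) → 0 < lqCost N A B Q R S H 0 u)
    {t : ℕ} (ht : t < N) : (riccatiWeight (B t) (R t) (P (t + 1))).PosDef := by
  induction t using Nat.strong_decreasing_induction with
  | base => exact ⟨N, fun t hNt ht ↦ absurd ht hNt.not_gt⟩
  | step t ih =>
    refine .of_dotProduct_mulVec_pos
      (isHermitian_iff_isSymm.2 (isSymm_riccatiWeight (hR t) (hP.isSymm hQ hR hH ht) _))
      fun v hv ↦ ?_
    set impulse : ℕ → Fin m → ℝ := Pi.single t v with himpulse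
    have hrest : clState A B (riccatiFeedback A B R S P) impulse 0 t = 0 :=
      clState_zero_eq_zero _ fun s hs ↦ by rw [himpulse, Pi.single_eq_of_ne hs.ne]
    have hcost := hP.lqCost_clControl_of_impulse hQ hR hH ht
      (fun s hts hs ↦ (ih s hts hs).isUnit) (v := impulse)
      fun s hs ↦ by rw [himpulse, Pi.single_eq_of_ne hs]
    rw [himpulse, Pi.single_eq_same] at hcost
    rw [star_trivial, ← hcost]
    refine hpos _ ⟨t, ht, ?_⟩
    rwa [clControl, ← himpulse, hrest, mulVec_zero, zero_add, himpulse, Pi.single_eq_same]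

theorem lqCost_clControl_le (hP : IsRiccatiSolution N A B Q R S H P) (hQ : ∀ t, (Q t).IsSymm)
    (hR : ∀ t, (R t).IsSymm) (hH : H.IsSymm)
    (hpos : ∀ u : ℕ → Fin m → ℝ, (∃ t < N, u t ≠ 0) → 0 < lqCost N A B Q R S H 0 u)
    (x₀ : Fin n → ℝ) (u : ℕ → Fin m → ℝ) :
    lqCost N A B Q R S H x₀ (clControl A B (riccatiFeedback A B R S P) 0 x₀)
      ≤ lqCost N A B Q R S H x₀ u := by
  have hposDef : ∀ t < N, (riccatiWeight (B t) (R t) (P (t + 1))).PosDef := fun t ht ↦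
    hP.posDef_riccatiWeight hQ hR hH hpos ht
  have hcost := hP.lqCost_eq hQ hR hH N.zero_le (fun t _ ht ↦ (hposDef t ht).isUnit) x₀
  rw [hcost u, hcost (clControl A B _ 0 x₀)]
  simp only [clControl_sub_mulVec_lqState, Pi.zero_apply, zero_dotProduct, sum_const_zero, add_zero]
  exact le_add_of_nonneg_right <| sum_nonneg fun t ht ↦
    (hposDef t (mem_Ico.1 ht).2).posSemidef.dotProduct_mulVec_nonneg _

end IsRiccatiSolution

end Riccati

section Perturbation

variable {n m N : ℕ} {A : ℕ → Matrix (Fin n) (Fin n) ℝ} {B : ℕ → Matrix (Fin n) (Fin m) ℝ}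
  {Q : ℕ → Matrix (Fin n) (Fin n) ℝ} {R : ℕ → Matrix (Fin m) (Fin m) ℝ}
  {S : ℕ → Matrix (Fin m) (Fin n) ℝ} {H : Matrix (Fin n) (Fin n) ℝ} {ε : ℝ}

theorem lqCostPert_eq_lqCost (x₀ : Fin n → ℝ) (u : ℕ → Fin m → ℝ) :
    lqCostPert N A B Q R S H ε x₀ u = lqCost N A B Q (fun t ↦ R t + ε • 1) S H x₀ u := by
  simp only [lqCostPert, lqCost, add_mulVec, smul_mulVec, one_mulVec, dotProduct_add,
    dotProduct_smul, smul_eq_mul, sum_add_distrib, mul_sum]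
  ring

theorem isRiccatiSolution_lqPe :
    IsRiccatiSolution N A B Q (fun t ↦ R t + ε • 1) S H (lqPe N A B Q R S H ε) where
  terminal := by simp only [lqPe, Nat.sub_self, lqPAux]
  step t ht := by
    have hsucc : N - t = N - (t + 1) + 1 := by omega
    have hindex : N - (N - (t + 1) + 1) = t := by omega
    rw [lqPe, hsucc, lqPAux, hindex, riccatiStep, riccatiWeight, add_right_comm (R t), lqPe]

theorem lqUe_eq_clControl (x₀ : Fin n → ℝ) :
    lqUe N A B Q R S H ε x₀ = clControl A B
      (riccatiFeedback A B (fun t ↦ R t + ε • 1) S (lqPe N A B Q R S H ε)) 0 x₀ := by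
  have hgain : lqKe N A B Q R S H ε
      = riccatiFeedback A B (fun t ↦ R t + ε • 1) S (lqPe N A B Q R S H ε) := by
    funext t
    rw [lqKe, riccatiFeedback, riccatiGain, riccatiWeight, add_right_comm]
  funext t
  rw [lqUe, hgain, clControl, Pi.zero_apply, add_zero]
  rfl

theorem lqCostPert_pos (hε : 0 < ε) {x₀ : Fin n → ℝ} {u : ℕ → Fin m → ℝ}
    (hnonneg : 0 ≤ lqCost N A B Q R S H x₀ u) (hu : ∃ t < N, u t ≠ 0) :
    0 < lqCostPert N A B Q R S H ε x₀ u := by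
  obtain ⟨t, ht, hut⟩ := hu
  refine add_pos_of_nonneg_of_pos hnonneg (mul_pos hε ?_)
  exact sum_pos' (fun s _ ↦ dotProduct_star_self_nonneg (u s))
    ⟨t, mem_range.2 ht, dotProduct_star_self_pos_iff.2 hut⟩

theorem lqCostPert_lqUe_le (hQ : ∀ t, (Q t).IsSymm) (hR : ∀ t, (R t).IsSymm) (hH : H.IsSymm)
    (hpos : ∀ u : ℕ → Fin m → ℝ, 0 ≤ lqCost N A B Q R S H 0 u) (hε : 0 < ε)
    (x₀ : Fin n → ℝ) (u : ℕ → Fin m → ℝ) :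
    lqCostPert N A B Q R S H ε x₀ (lqUe N A B Q R S H ε x₀) ≤ lqCostPert N A B Q R S H ε x₀ u := by
  rw [lqCostPert_eq_lqCost, lqCostPert_eq_lqCost, lqUe_eq_clControl]
  refine isRiccatiSolution_lqPe.lqCost_clControl_le hQ (fun t ↦ (hR t).add (isSymm_one.smul ε)) hH
    (fun w hw ↦ ?_) x₀ u
  rw [← lqCostPert_eq_lqCost]
  exact lqCostPert_pos hε (hpos w) hw

end Perturbation

section ControlSpace

variable {n m N : ℕ} {A : ℕ → Matrix (Fin n) (Fin n) ℝ} {B : ℕ → Matrix (Fin n) (Fin m) ℝ}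
  {Q : ℕ → Matrix (Fin n) (Fin n) ℝ} {R : ℕ → Matrix (Fin m) (Fin m) ℝ}
  {S : ℕ → Matrix (Fin m) (Fin n) ℝ} {H : Matrix (Fin n) (Fin n) ℝ}

theorem lqState_smul_add_smul (a b : ℝ) (x y : Fin n → ℝ) (u v : ℕ → Fin m → ℝ) (t : ℕ) :
    lqState A B (a • x + b • y) (a • u + b • v) t
      = a • lqState A B x u t + b • lqState A B y v t := by
  induction t with
  | zero => rfl
  | succ t ih =>
    simp only [lqState, ih, Pi.add_apply, Pi.smul_apply, mulVec_add, mulVec_smul, smul_add]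
    abel

theorem lqState_sub (x y : Fin n → ℝ) (u v : ℕ → Fin m → ℝ) (t : ℕ) :
    lqState A B (x - y) (u - v) t = lqState A B x u t - lqState A B y v t := by
  simpa only [one_smul, neg_one_smul, ← sub_eq_add_neg] using
    lqState_smul_add_smul 1 (-1) x y u v t

theorem lqCost_smul_add_smul {a b : ℝ} (hab : a + b = 1) (x y : Fin n → ℝ)
    (u v : ℕ → Fin m → ℝ) :
    lqCost N A B Q R S H (a • x + b • y) (a • u + b • v)
      = a * lqCost N A B Q R S H x u + b * lqCost N A B Q R S H y v
        - a * b * lqCost N A B Q R S H (x - y) (u - v) := by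
  have hterminal := lqStageCost_smul_add_smul hab H (0 : Matrix (Fin m) (Fin m) ℝ) 0
    (lqState A B x u N) (lqState A B y v N) 0 0
  simp only [lqStageCost, zero_mulVec, dotProduct_zero, mul_zero, add_zero] at hterminal
  simp only [lqCost_eq_sum_lqStageCost, lqState_smul_add_smul, lqState_sub, Pi.add_apply,
    Pi.sub_apply, Pi.smul_apply, lqStageCost_smul_add_smul hab, hterminal, sum_add_distrib,
    sum_sub_distrib, ← mul_sum]
  ring

theorem convexOn_lqCost (hpos : ∀ u : ℕ → Fin m → ℝ, 0 ≤ lqCost N A B Q R S H 0 u)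
    (x₀ : Fin n → ℝ) : ConvexOn ℝ Set.univ (lqCost N A B Q R S H x₀) := by
  refine ⟨convex_univ, fun u _ v _ a b ha hb hab ↦ ?_⟩
  have hcomb := lqCost_smul_add_smul (N := N) (A := A) (B := B) (Q := Q) (R := R) (S := S)
    (H := H) hab x₀ x₀ u v
  rw [← add_smul, hab, one_smul, sub_self] at hcomb
  rw [hcomb]
  exact sub_le_self _ (mul_nonneg (mul_nonneg ha hb) (hpos _))

theorem lqState_congr {x₀ : Fin n → ℝ} {u v : ℕ → Fin m → ℝ} {t : ℕ} (huv : ∀ s < t, u s = v s) :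
    lqState A B x₀ u t = lqState A B x₀ v t := by
  induction t with
  | zero => rfl
  | succ t ih =>
    rw [lqState, lqState, ih fun s hs ↦ huv s (hs.trans t.lt_succ_self), huv t t.lt_succ_self]

theorem lqCost_congr {x₀ : Fin n → ℝ} {u v : ℕ → Fin m → ℝ} (huv : ∀ t < N, u t = v t) :
    lqCost N A B Q R S H x₀ u = lqCost N A B Q R S H x₀ v := by
  have hstate : ∀ t ≤ N, lqState A B x₀ u t = lqState A B x₀ v t := fun t ht ↦
    lqState_congr fun s hs ↦ huv s (hs.trans_le ht)
  rw [lqCost_eq_sum_lqStageCost, lqCost_eq_sum_lqStageCost, hstate N le_rfl]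
  congr 1
  refine sum_congr rfl fun t ht ↦ ?_
  rw [hstate t (mem_range.1 ht).le, huv t (mem_range.1 ht)]

/-- Extension by zero of a control on `{0, …, N - 1}` to all times. Finite-horizon controls are
encoded as a Euclidean space, whose norm is the one penalized by `lqCostPert`. -/
def extendControl (N m : ℕ) : EuclideanSpace ℝ (Fin N × Fin m) →ₗ[ℝ] ℕ → Fin m → ℝ where
  toFun e t i := if h : t < N then e (⟨t, h⟩, i) else 0
  map_add' e f := by
    ext t i
    by_cases h : t < N <;> simp [h]
  map_smul' c e := by
    ext t i
    by_cases h : t < N <;> simp [h]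

/-- Restriction of a control to the horizon `{0, …, N - 1}`. -/
def restrictControl (N : ℕ) (u : ℕ → Fin m → ℝ) : EuclideanSpace ℝ (Fin N × Fin m) :=
  WithLp.toLp 2 fun p ↦ u p.1 p.2

theorem extendControl_restrictControl (u : ℕ → Fin m → ℝ) {t : ℕ} (ht : t < N) :
    extendControl N m (restrictControl N u) t = u t := by
  ext i
  simp [extendControl, restrictControl, ht]

theorem norm_sq_eq_sum_extendControl (e : EuclideanSpace ℝ (Fin N × Fin m)) :
    ‖e‖ ^ 2 = ∑ t ∈ range N, extendControl N m e t ⬝ᵥ extendControl N m e t := by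
  rw [EuclideanSpace.real_norm_sq_eq, Fintype.sum_prod_type, sum_range]
  simp [extendControl, dotProduct, sq]

theorem norm_restrictControl_sub_sq (u : ℕ → Fin m → ℝ) (e : EuclideanSpace ℝ (Fin N × Fin m)) :
    ‖restrictControl N u - e‖ ^ 2
      = ∑ t ∈ range N, (u t - extendControl N m e t) ⬝ᵥ (u t - extendControl N m e t) := by
  rw [norm_sq_eq_sum_extendControl]
  refine sum_congr rfl fun t ht ↦ ?_
  rw [map_sub, Pi.sub_apply, extendControl_restrictControl u (mem_range.1 ht)]

theorem lqCost_extendControl_restrictControl (x₀ : Fin n → ℝ) (u : ℕ → Fin m → ℝ) :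
    lqCost N A B Q R S H x₀ (extendControl N m (restrictControl N u))
      = lqCost N A B Q R S H x₀ u :=
  lqCost_congr fun _ ht ↦ extendControl_restrictControl u ht

theorem lqCostPert_extendControl (ε : ℝ) (x₀ : Fin n → ℝ)
    (e : EuclideanSpace ℝ (Fin N × Fin m)) :
    lqCostPert N A B Q R S H ε x₀ (extendControl N m e)
      = lqCost N A B Q R S H x₀ (extendControl N m e) + ε * ‖e‖ ^ 2 := by
  rw [lqCostPert, norm_sq_eq_sum_extendControl]

theorem isMinOn_lqCost_extendControl_iff {x₀ : Fin n → ℝ}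
    {e : EuclideanSpace ℝ (Fin N × Fin m)} :
    IsMinOn (lqCost N A B Q R S H x₀ ∘ extendControl N m) Set.univ e ↔
      ∀ u, lqCost N A B Q R S H x₀ (extendControl N m e) ≤ lqCost N A B Q R S H x₀ u := by
  refine isMinOn_univ_iff.trans ⟨fun he u ↦ ?_, fun he v ↦ he _⟩
  exact (he (restrictControl N u)).trans_eq (lqCost_extendControl_restrictControl x₀ u)

theorem isTikhonovFamily_restrictControl_lqUe (hQ : ∀ t, (Q t).IsSymm) (hR : ∀ t, (R t).IsSymm)
    (hH : H.IsSymm) (hpos : ∀ u : ℕ → Fin m → ℝ, 0 ≤ lqCost N A B Q R S H 0 u)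
    (x₀ : Fin n → ℝ) :
    IsTikhonovFamily (lqCost N A B Q R S H x₀ ∘ extendControl N m)
      fun ε ↦ restrictControl N (lqUe N A B Q R S H ε x₀) := by
  refine fun ε hε ↦ isMinOn_univ_iff.2 fun e ↦ ?_
  simp only [Function.comp_apply]
  rw [← lqCostPert_extendControl, ← lqCostPert_extendControl, lqCostPert_eq_lqCost,
    lqCost_extendControl_restrictControl, ← lqCostPert_eq_lqCost]
  exact lqCostPert_lqUe_le hQ hR hH hpos hε x₀ _

end ControlSpace

/-- Theorem 4 (1) ⇒ (3) and Corollary 1: if Problem (LQ) is open-loop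
solvable at `x₀`, then the family `{u^ε}` converges strongly, as `ε → 0⁺`, to an
open-loop optimal control `u*` of Problem (LQ) for `x₀`. -/
theorem stmt_12 {n m : ℕ} (hn : 0 < n) (hm : 0 < m) (N : ℕ) (hN : 0 < N)
    (A : ℕ → Matrix (Fin n) (Fin n) ℝ) (B : ℕ → Matrix (Fin n) (Fin m) ℝ)
    (Q : ℕ → Matrix (Fin n) (Fin n) ℝ) (R : ℕ → Matrix (Fin m) (Fin m) ℝ)
    (S : ℕ → Matrix (Fin m) (Fin n) ℝ) (H : Matrix (Fin n) (Fin n) ℝ)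
    (hQ : ∀ t, (Q t).IsSymm) (hR : ∀ t, (R t).IsSymm) (hH : H.IsSymm)
    (hpos : ∀ u : ℕ → Fin m → ℝ, 0 ≤ lqCost N A B Q R S H 0 u)
    (x₀ : Fin n → ℝ)
    (hsolv : ∃ ubar : ℕ → Fin m → ℝ, ∀ u : ℕ → Fin m → ℝ,
      lqCost N A B Q R S H x₀ ubar ≤ lqCost N A B Q R S H x₀ u) :
    ∃ ustar : ℕ → Fin m → ℝ,
      (∀ u : ℕ → Fin m → ℝ,
        lqCost N A B Q R S H x₀ ustar ≤ lqCost N A B Q R S H x₀ u) ∧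
      Filter.Tendsto
        (fun ε : ℝ => ∑ t ∈ range N,
          (lqUe N A B Q R S H ε x₀ t - ustar t) ⬝ᵥ (lqUe N A B Q R S H ε x₀ t - ustar t))
        (nhdsWithin 0 (Set.Ioi 0)) (nhds 0) := by
  obtain ⟨ubar, hubar⟩ := hsolv
  have hconv := (convexOn_lqCost hpos x₀).comp_linearMap (extendControl N m)
  have hmin : IsMinOn (lqCost N A B Q R S H x₀ ∘ extendControl N m) Set.univ
      (restrictControl N ubar) :=
    isMinOn_lqCost_extendControl_iff.2 fun u ↦ by
      simpa only [lqCost_extendControl_restrictControl] using hubar u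
  have hfamily := isTikhonovFamily_restrictControl_lqUe hQ hR hH hpos x₀
  obtain ⟨a, ha, hlim⟩ := hfamily.exists_tendsto_isMinOn hconv
    hconv.locallyLipschitz.continuous.lowerSemicontinuous ⟨_, hmin⟩
  refine ⟨extendControl N m a, isMinOn_lqCost_extendControl_iff.1 ha, ?_⟩
  simpa only [norm_restrictControl_sub_sq, zero_pow two_ne_zero] using
    (tendsto_iff_norm_sub_tendsto_zero.1 hlim).pow 2
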